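/- arXiv:1802.04826 — 5 statements merged into one kernel-verified Lean document; each statement's English description precedes it below -/
import Mathlib

section
/- Let p, d ≥ 1, let x_1, …, x_n ∈ ℝ^p be data points, let P be a probability measure on ℝ^d that is absolutely continuous with respect to Lebesgue measure and has mean zero, fix i ∈ {1,…,n} and w ∈ ℝ^d with w ≠ 0, and let (α_k)_{k≥1} be a sequence of nonnegative reals with α_k → +∞. For each k define σ_k²(z) = exp(α_k·tanh(α_k·(wᵀz)) − α_k) for z ∈ ℝ^d. Then the log-likelihood ℓ_k = Σ_{j=1}^n log ∫_{ℝ^d} N(x_j | x_i, σ_k²(z)·I_p) dP(z) satisfies ℓ_k → +∞ as k → +∞. -/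
open MeasureTheory Filter Real

/-- The multivariate Gaussian density
`N(x|μ,Σ) = (2π)^{-p/2} det(Σ)^{-1/2} exp(−(x−μ)ᵀ Σ⁻¹ (x−μ)/2)`. -/
noncomputable def gaussDensity {p : ℕ} (x μ : Fin p → ℝ) (S : Matrix (Fin p) (Fin p) ℝ) : ℝ :=
  (2 * π) ^ (-(p : ℝ) / 2) * S.det ^ (-(1 : ℝ) / 2) *
    Real.exp (-(dotProduct (x - μ) (S⁻¹.mulVec (x - μ))) / 2)

lemma gd_formula {p : ℕ} (x μ : Fin p → ℝ) (t : ℝ) :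
    gaussDensity x μ (Real.exp t • (1 : Matrix (Fin p) (Fin p) ℝ)) =
      (2 * π) ^ (-(p : ℝ) / 2) * Real.exp (-(p * t) / 2) *
        Real.exp (-(Real.exp (-t) * dotProduct (x - μ) (x - μ)) / 2) := by
  have h1 : (Real.exp t • (1 : Matrix (Fin p) (Fin p) ℝ)).det ^ (-(1:ℝ)/2)
      = Real.exp (-(p * t) / 2) := by
    rw [Matrix.det_smul, Matrix.det_one, mul_one, Fintype.card_fin, ← Real.exp_nat_mul,
      ← Real.exp_mul]
    congr 1; ring
  have h2 : (Real.exp t • (1 : Matrix (Fin p) (Fin p) ℝ))⁻¹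
      = Real.exp (-t) • (1 : Matrix (Fin p) (Fin p) ℝ) := by
    apply Matrix.inv_eq_right_inv
    rw [smul_mul_smul_comm, mul_one, ← Real.exp_add]
    simp
  unfold gaussDensity
  rw [h1, h2, Matrix.smul_mulVec, Matrix.one_mulVec, dotProduct_smul, smul_eq_mul]

lemma halfspace_pos {d : ℕ} (P : Measure (Fin d → ℝ)) [IsProbabilityMeasure P]
    (hac : P ≪ volume)
    (hintP : Integrable (fun z : Fin d → ℝ => z) P)
    (hmean : (∫ z, z ∂P) = 0) (w : Fin d → ℝ) (hw : w ≠ 0) :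
    P {z | 0 < dotProduct w z} ≠ 0 := by
  intro h0
  let L : (Fin d → ℝ) →ₗ[ℝ] ℝ := dotProductBilin ℝ ℝ w
  have hL : ∀ z, L z = dotProduct w z := fun z => rfl
  let M : (Fin d → ℝ) →L[ℝ] ℝ := LinearMap.toContinuousLinearMap L
  have hM : ∀ z, M z = dotProduct w z := fun z => rfl
  have hint : Integrable (fun z => M z) P := M.integrable_comp hintP
  have hI : ∫ z, M z ∂P = 0 := by
    rw [M.integral_comp_comm hintP, hmean, map_zero]
  have hle : ∀ᵐ z ∂P, 0 ≤ - M z := by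
    rw [ae_iff]
    convert h0 using 3
    simp [hM]
  have hz : (fun z => - M z) =ᵐ[P] 0 := by
    rw [← integral_eq_zero_iff_of_nonneg_ae hle hint.neg, integral_neg, hI, neg_zero]
  have hker : volume ((LinearMap.ker L : Submodule ℝ (Fin d → ℝ)) : Set (Fin d → ℝ)) = 0 := by
    apply Measure.addHaar_submodule
    intro htop
    have : w ∈ LinearMap.ker L := by rw [htop]; trivial
    rw [LinearMap.mem_ker, hL, dotProduct_self_eq_zero] at this
    exact hw this
  have hker' := hac hker
  have : ∀ᵐ z ∂P, False := by
    filter_upwards [hz, measure_eq_zero_iff_ae_notMem.1 hker'] with z h1 h2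
    apply h2
    have : M z = 0 := by simpa using h1
    exact this
  rw [ae_iff] at this
  simp at this

lemma halfspace_pos' {d : ℕ} (P : Measure (Fin d → ℝ)) (w : Fin d → ℝ)
    (h : P {z | 0 < dotProduct w z} ≠ 0) :
    ∃ δ : ℝ, 0 < δ ∧ P {z | δ < dotProduct w z} ≠ 0 := by
  by_contra! hc
  apply h
  have : {z | 0 < dotProduct w z} = ⋃ m : ℕ, {z | 1 / ((m : ℝ) + 1) < dotProduct w z} := by
    ext z
    simp only [Set.mem_setOf_eq, Set.mem_iUnion]
    constructor
    · exact fun hz => exists_nat_one_div_lt hz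
    · rintro ⟨m, hm⟩
      exact lt_trans (by positivity) hm
  rw [this, measure_iUnion_null_iff]
  exact fun m => hc _ (by positivity)

lemma tanh_bound (a δ u : ℝ) (ha : 0 ≤ a) (hδ : 0 < δ) (hu : δ < u) :
    -(1/δ) ≤ a * Real.tanh (a * u) - a := by
  rcases ha.eq_or_lt with rfl | ha
  · simp; positivity
  have ht : 0 < a * u := by have := hδ.trans hu; positivity
  have key : 1 - 1 / (a * u) ≤ Real.tanh (a * u) := by
    set t := a * u
    rw [Real.tanh_eq_sinh_div_cosh, le_div_iff₀ (Real.cosh_pos t)]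
    have e1 : Real.cosh t - Real.sinh t = Real.exp (-t) := Real.cosh_sub_sinh t
    have e2 : t ≤ Real.sinh t := Real.self_le_sinh_iff.2 ht.le
    have e3 : Real.exp (-t) ≤ 1 := Real.exp_le_one_iff.2 (by linarith)
    have e4 : Real.sinh t < Real.cosh t := Real.sinh_lt_cosh t
    have : Real.exp (-t) ≤ 1 / t * Real.cosh t := by
      rw [one_div, inv_mul_eq_div, le_div_iff₀ ht]
      nlinarith
    linarith
  have h2 : a * (1 - 1 / (a * u)) ≤ a * Real.tanh (a*u) := mul_le_mul_of_nonneg_left key ha.le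
  have h3 : a * (1 - 1 / (a * u)) = a - 1 / u := by
    have := hδ.trans hu
    field_simp
  have h4 : 1 / u ≤ 1 / δ := one_div_le_one_div_of_le hδ hu.le
  linarith

lemma int_lower {d : ℕ} (P : Measure (Fin d → ℝ)) [IsProbabilityMeasure P]
    (f : (Fin d → ℝ) → ℝ) (hf : Integrable f P) (h0 : ∀ z, 0 ≤ f z) (A : Set (Fin d → ℝ))
    (hA : MeasurableSet A) (c : ℝ) (hc : ∀ z ∈ A, c ≤ f z) :
    P.real A * c ≤ ∫ z, f z ∂P := by
  calc P.real A * c = ∫ z in A, c ∂P := by simp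
    _ ≤ ∫ z in A, f z ∂P :=
      setIntegral_mono_on (integrable_const c).integrableOn hf.integrableOn hA hc
    _ ≤ ∫ z, f z ∂P := setIntegral_le_integral hf (Eventually.of_forall h0)

lemma cont_tanh' : Continuous Real.tanh := by
  have : Real.tanh = fun x => Real.sinh x / Real.cosh x := by
    ext x; exact Real.tanh_eq_sinh_div_cosh x
  rw [this]
  exact Real.continuous_sinh.div Real.continuous_cosh (fun x => (Real.cosh_pos x).ne')

/-- Theorem 1 of the paper: along the sequence of decoders with constant mean `x i` and
isotropic covariance `σ_k²(z)·I_p`, where `σ_k²(z) = exp(α_k tanh(α_k wᵀz) − α_k)`,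
the log-likelihood diverges to `+∞`. -/
theorem statement0 (p d n : ℕ) (hp : 1 ≤ p) (hd : 1 ≤ d)
    (x : Fin n → (Fin p → ℝ))
    (P : Measure (Fin d → ℝ)) [IsProbabilityMeasure P]
    (hac : P ≪ volume)
    (hintP : Integrable (fun z : Fin d → ℝ => z) P)
    (hmean : (∫ z, z ∂P) = 0)
    (i : Fin n) (w : Fin d → ℝ) (hw : w ≠ 0)
    (α : ℕ → ℝ) (hα0 : ∀ k, 0 ≤ α k) (hα : Tendsto α atTop atTop) :
    Tendsto (fun k : ℕ => ∑ j : Fin n, Real.log (∫ z,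
        gaussDensity (x j) (x i)
          (Real.exp (α k * Real.tanh (α k * dotProduct w z) - α k) •
            (1 : Matrix (Fin p) (Fin p) ℝ)) ∂P))
      atTop atTop := by
  set C : ℝ := (2 * π) ^ (-(p : ℝ) / 2) with hC
  have hCpos : 0 < C := by positivity
  simp_rw [gd_formula]
  rw [← hC]
  set D : Fin n → ℝ := fun j => dotProduct (x j - x i) (x j - x i) with hD
  have hD0 : ∀ j, 0 ≤ D j := fun j => by
    simp only [hD, dotProduct]
    exact Finset.sum_nonneg fun a _ => mul_self_nonneg _
  have hDi : D i = 0 := by simp [hD]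
  let t : ℕ → (Fin d → ℝ) → ℝ := fun k z => α k * Real.tanh (α k * dotProduct w z) - α k
  have htc : ∀ k, Continuous (t k) := fun k => by
    have h1 : Continuous fun z : Fin d → ℝ => dotProduct w z :=
      continuous_const.dotProduct continuous_id
    exact (continuous_const.mul (cont_tanh'.comp (continuous_const.mul h1))).sub continuous_const
  let f : ℕ → Fin n → (Fin d → ℝ) → ℝ := fun k j z =>
    C * Real.exp (-(p * t k z) / 2) * Real.exp (-(Real.exp (-(t k z)) * D j) / 2)
  change Tendsto (fun k : ℕ => ∑ j : Fin n, Real.log (∫ z, f k j z ∂P)) atTop atTop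
  have hf0 : ∀ k j z, 0 ≤ f k j z := fun k j z => by positivity
  have htl : ∀ k z, -(2 * α k) ≤ t k z := fun k z => by
    have := (Real.neg_one_lt_tanh (α k * dotProduct w z)).le
    have := mul_le_mul_of_nonneg_left this (hα0 k)
    simp only [t]; linarith
  have htu : ∀ k z, t k z ≤ 0 := fun k z => by
    have := (Real.tanh_lt_one (α k * dotProduct w z)).le
    have := mul_le_mul_of_nonneg_left this (hα0 k)
    simp only [t]; linarith
  have hp0 : (0:ℝ) < p := by exact_mod_cast hp
  have hfi : ∀ k j, Integrable (f k j) P := fun k j => by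
    have hcont : Continuous (f k j) := by
      have := htc k
      simp only [f]
      fun_prop
    apply Integrable.of_bound hcont.aestronglyMeasurable (C * Real.exp (p * α k) * 1)
    refine Eventually.of_forall fun z => ?_
    rw [Real.norm_of_nonneg (hf0 k j z)]
    have h1 : Real.exp (-(p * t k z) / 2) ≤ Real.exp (p * α k) := by
      apply Real.exp_le_exp.2
      nlinarith [htl k z]
    have h2 : Real.exp (-(Real.exp (-(t k z)) * D j) / 2) ≤ 1 := by
      apply Real.exp_le_one_iff.2
      have := mul_nonneg (Real.exp_pos (-(t k z))).le (hD0 j)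
      linarith
    simp only [f]
    gcongr
  have hmeas : ∀ (v : Fin d → ℝ) (δ : ℝ), MeasurableSet {z : Fin d → ℝ | δ < dotProduct v z} :=
    fun v δ => (isOpen_lt continuous_const (continuous_const.dotProduct continuous_id)).measurableSet
  obtain ⟨δ, hδ, hPδ⟩ := halfspace_pos' P w (halfspace_pos P hac hintP hmean w hw)
  have hPn := halfspace_pos P hac hintP hmean (-w) (neg_ne_zero.2 hw)
  set A := {z | δ < dotProduct w z} with hA
  set B := {z | 0 < dotProduct (-w) z} with hB
  have hPA : 0 < P.real A := ENNReal.toReal_pos hPδ (measure_ne_top _ _)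
  have hPB : 0 < P.real B := ENNReal.toReal_pos hPn (measure_ne_top _ _)
  let c : Fin n → ℝ := fun j => P.real A * (C * 1 * Real.exp (-(Real.exp (1/δ) * D j) / 2))
  have hc0 : ∀ j, 0 < c j := fun j => by positivity
  have hlow : ∀ k j, c j ≤ ∫ z, f k j z ∂P := fun k j => by
    apply int_lower P _ (hfi k j) (hf0 k j) A (hmeas _ _)
    intro z hz
    have h1 : 1 ≤ Real.exp (-(p * t k z) / 2) := by
      apply Real.one_le_exp
      nlinarith [htu k z]
    have h2 := tanh_bound (α k) δ (dotProduct w z) (hα0 k) hδ hz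
    have h3 : Real.exp (-(t k z)) ≤ Real.exp (1/δ) := by
      apply Real.exp_le_exp.2
      simp only [t]; linarith
    have h4 := mul_le_mul_of_nonneg_right h3 (hD0 j)
    have h5 : Real.exp (-(Real.exp (1/δ) * D j) / 2)
        ≤ Real.exp (-(Real.exp (-(t k z)) * D j) / 2) := by
      apply Real.exp_le_exp.2; linarith
    simp only [f]
    gcongr
  have hlowi : ∀ k, P.real B * (C * Real.exp (p * α k / 2) * 1) ≤ ∫ z, f k i z ∂P := fun k => by
    apply int_lower P _ (hfi k i) (hf0 k i) B (hmeas _ _)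
    intro z hz
    have hz' : dotProduct w z < 0 := by
      have : 0 < dotProduct (-w) z := hz
      rw [neg_dotProduct] at this; linarith
    have h1 : Real.tanh (α k * dotProduct w z) ≤ 0 := by
      rw [Real.tanh_eq_sinh_div_cosh]
      apply div_nonpos_of_nonpos_of_nonneg _ (Real.cosh_pos _).le
      rw [Real.sinh_nonpos_iff]
      exact mul_nonpos_of_nonneg_of_nonpos (hα0 k) hz'.le
    have h2 : t k z ≤ - α k := by
      have := mul_nonpos_of_nonneg_of_nonpos (hα0 k) h1
      simp only [t]; linarith
    have h3 : Real.exp (p * α k / 2) ≤ Real.exp (-(p * t k z) / 2) := by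
      apply Real.exp_le_exp.2
      nlinarith
    simp only [f, hDi]
    rw [mul_zero, neg_zero, zero_div, Real.exp_zero]
    gcongr
  have hb : ∀ k, (Real.log (P.real B * C) + p / 2 * α k)
      + ∑ j ∈ Finset.univ.erase i, Real.log (c j) ≤ ∑ j : Fin n, Real.log (∫ z, f k j z ∂P) := by
    intro k
    rw [← Finset.add_sum_erase _ _ (Finset.mem_univ i)]
    apply add_le_add
    · have : Real.log (P.real B * C) + p / 2 * α k
          = Real.log (P.real B * (C * Real.exp (p * α k / 2) * 1)) := by
        rw [mul_one, ← mul_assoc, Real.log_mul (x := P.real B * C) (by positivity) (by positivity), Real.log_exp]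
        ring
      rw [this]
      exact Real.log_le_log (by positivity) (hlowi k)
    · exact Finset.sum_le_sum fun j _ => Real.log_le_log (hc0 j) (hlow k j)
  refine tendsto_atTop_mono hb ?_
  apply tendsto_atTop_add_const_right
  apply tendsto_atTop_add_const_left
  exact hα.const_mul_atTop (by positivity)
end

section
/- Let p, d ≥ 1, ξ > 0, let P be a probability measure on ℝ^d, let μ: ℝ^d → ℝ^p be measurable, and let Σ: ℝ^d → (p×p positive-semidefinite matrices) be measurable such that every eigenvalue of Σ(z) is at least ξ for all z ∈ ℝ^d. Then for every x ∈ ℝ^p, ∫_{ℝ^d} N(x | μ(z), Σ(z)) dP(z) ≤ (2πξ)^{-p/2}. Consequently, for any data x_1,…,x_n ∈ ℝ^p, the log-likelihood Σ_{i=1}^n log ∫ N(x_i | μ(z), Σ(z)) dP(z) is bounded above by −(np/2)·log(2πξ). -/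
open MeasureTheory Filter Real

theorem det_ge_aux {p : ℕ} {ξ : ℝ} (hξ : 0 < ξ) (S : Matrix (Fin p) (Fin p) ℝ)
    (h : (S - ξ • (1 : Matrix (Fin p) (Fin p) ℝ)).PosSemidef) : ξ ^ p ≤ S.det := by
  have h1 := Matrix.eval_charpoly (S - ξ • (1 : Matrix (Fin p) (Fin p) ℝ)) (-ξ)
  have h2 : Matrix.scalar (Fin p) (-ξ) - (S - ξ • (1 : Matrix (Fin p) (Fin p) ℝ)) = -S := by
    rw [Matrix.scalar_apply, ← Matrix.smul_one_eq_diagonal, neg_smul]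
    abel
  rw [h2, Matrix.det_neg, h.1.charpoly_eq, Polynomial.eval_prod] at h1
  have h3 : ∏ j, Polynomial.eval (-ξ) (Polynomial.X - Polynomial.C (h.1.eigenvalues j : ℝ))
      = (-1) ^ p * ∏ j, (ξ + h.1.eigenvalues j) := by
    have : ∀ j, Polynomial.eval (-ξ) (Polynomial.X - Polynomial.C (h.1.eigenvalues j : ℝ))
      = (-1) * (ξ + h.1.eigenvalues j) := by intro j; simp; ring
    rw [Finset.prod_congr rfl (fun j _ => this j), Finset.prod_mul_distrib]
    simp
  have h4 : S.det = ∏ j, (ξ + h.1.eigenvalues j) := by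
    have h5 := h3.symm.trans h1
    rw [Fintype.card_fin] at h5
    exact (mul_left_cancel₀ (pow_ne_zero _ (by norm_num)) h5).symm
  rw [h4]
  calc ξ ^ p = ∏ _j : Fin p, ξ := by simp
    _ ≤ _ := Finset.prod_le_prod (fun _ _ => hξ.le)
      (fun j _ => by linarith [h.eigenvalues_nonneg j])

theorem gauss_pos_aux {p : ℕ} {ξ : ℝ} (hξ : 0 < ξ) (y m : Fin p → ℝ)
    (S : Matrix (Fin p) (Fin p) ℝ)
    (h : (S - ξ • (1 : Matrix (Fin p) (Fin p) ℝ)).PosSemidef) : 0 < gaussDensity y m S := by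
  have hd : 0 < S.det := lt_of_lt_of_le (pow_pos hξ p) (det_ge_aux hξ S h)
  unfold gaussDensity
  have := Real.pi_pos
  positivity

theorem gauss_le_aux {p : ℕ} {ξ : ℝ} (hξ : 0 < ξ) (y m : Fin p → ℝ)
    (S : Matrix (Fin p) (Fin p) ℝ) (hS : S.PosSemidef)
    (h : (S - ξ • (1 : Matrix (Fin p) (Fin p) ℝ)).PosSemidef) :
    gaussDensity y m S ≤ (2 * π * ξ) ^ (-(p : ℝ) / 2) := by
  have hd' := det_ge_aux hξ S h
  have hd : 0 < S.det := lt_of_lt_of_le (pow_pos hξ p) hd'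
  have hpi : 0 < 2 * π := by positivity
  unfold gaussDensity
  have h1 : Real.exp (-(dotProduct (y - m) (S⁻¹.mulVec (y - m))) / 2) ≤ 1 := by
    have := hS.inv.dotProduct_mulVec_nonneg (y - m)
    rw [star_trivial] at this
    rw [Real.exp_le_one_iff]
    linarith
  have h2 : S.det ^ (-(1 : ℝ) / 2) ≤ ξ ^ (-(p : ℝ) / 2) := by
    calc S.det ^ (-(1 : ℝ) / 2) ≤ (ξ ^ p) ^ (-(1 : ℝ) / 2) :=
          Real.rpow_le_rpow_of_nonpos (pow_pos hξ p) hd' (by norm_num)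
      _ = _ := by
        rw [← Real.rpow_natCast, ← Real.rpow_mul hξ.le]
        congr 1
        ring
  rw [Real.mul_rpow hpi.le hξ.le]
  have h3 : 0 ≤ (2 * π) ^ (-(p : ℝ) / 2) := by positivity
  calc _ ≤ (2 * π) ^ (-(p : ℝ) / 2) * S.det ^ (-(1 : ℝ) / 2) * 1 :=
        mul_le_mul_of_nonneg_left h1 (by positivity)
    _ ≤ _ := by rw [mul_one]; exact mul_le_mul_of_nonneg_left h2 h3

theorem gauss_meas_aux {p d : ℕ} (y : Fin p → ℝ)
    (μ : (Fin d → ℝ) → (Fin p → ℝ)) (hμ : Measurable μ)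
    (S : (Fin d → ℝ) → Matrix (Fin p) (Fin p) ℝ)
    (hS : ∀ a b, Measurable fun z => S z a b) :
    Measurable fun z => gaussDensity y (μ z) (S z) := by
  have hdet : ∀ T : (Fin d → ℝ) → Matrix (Fin p) (Fin p) ℝ,
      (∀ a b, Measurable fun z => T z a b) → Measurable fun z => (T z).det := by
    intro T hT
    simp only [Matrix.det_apply']
    exact Finset.measurable_fun_sum _ fun σ _ =>
      (Finset.measurable_fun_prod _ fun i _ => hT _ _).const_mul _
  have hinv : ∀ a b, Measurable fun z => (S z)⁻¹ a b := by
    intro a b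
    simp only [Matrix.inv_def, Matrix.smul_apply, Ring.inverse_eq_inv', smul_eq_mul,
      Matrix.adjugate_apply]
    refine (hdet S hS).inv.mul (hdet _ ?_)
    intro i j
    simp only [Matrix.updateRow_apply]
    split_ifs
    · exact measurable_const
    · exact hS _ _
  have hm : ∀ i, Measurable fun z => μ z i := fun i => (measurable_pi_apply i).comp hμ
  unfold gaussDensity
  simp only [dotProduct, Matrix.mulVec, Pi.sub_apply]
  refine (((hdet S hS).pow_const _).const_mul _).mul (Real.measurable_exp.comp ?_)
  refine Measurable.div_const (Measurable.neg ?_) _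
  exact Finset.measurable_fun_sum _ fun i _ => ((hm i).const_sub _).mul
    (Finset.measurable_fun_sum _ fun j _ => (hinv i j).mul ((hm j).const_sub _))

/-- Proposition 2 of the paper: if every eigenvalue of the covariance decoder `S(z)` is at
least `ξ > 0` (expressed as `S(z)` and `S(z) − ξ·I` positive semidefinite), then every
marginal density value is at most `(2πξ)^{-p/2}` and the log-likelihood is bounded above by
`−(np/2)·log(2πξ)`. -/
theorem statement2 (p d n : ℕ) (hp : 1 ≤ p) (hd : 1 ≤ d) (ξ : ℝ) (hξ : 0 < ξ)
    (P : Measure (Fin d → ℝ)) [IsProbabilityMeasure P]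
    (μ : (Fin d → ℝ) → (Fin p → ℝ)) (hμ : Measurable μ)
    (S : (Fin d → ℝ) → Matrix (Fin p) (Fin p) ℝ)
    (hSmeas : ∀ a b, Measurable fun z => S z a b)
    (hSpsd : ∀ z, (S z).PosSemidef)
    (hSeig : ∀ z, (S z - ξ • (1 : Matrix (Fin p) (Fin p) ℝ)).PosSemidef)
    (x : Fin n → (Fin p → ℝ)) :
    (∀ y : Fin p → ℝ, (∫ z, gaussDensity y (μ z) (S z) ∂P) ≤ (2 * π * ξ) ^ (-(p : ℝ) / 2)) ∧
    (∑ i, Real.log (∫ z, gaussDensity (x i) (μ z) (S z) ∂P)) ≤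
      -((n : ℝ) * p / 2) * Real.log (2 * π * ξ) := by
  have hint : ∀ y, Integrable (fun z => gaussDensity y (μ z) (S z)) P := by
    intro y
    refine Integrable.of_bound (gauss_meas_aux y μ hμ S hSmeas).aestronglyMeasurable
      ((2 * π * ξ) ^ (-(p : ℝ) / 2)) (Eventually.of_forall fun z => ?_)
    rw [Real.norm_of_nonneg (gauss_pos_aux hξ _ _ _ (hSeig z)).le]
    exact gauss_le_aux hξ _ _ _ (hSpsd z) (hSeig z)
  have hle : ∀ y : Fin p → ℝ,
      (∫ z, gaussDensity y (μ z) (S z) ∂P) ≤ (2 * π * ξ) ^ (-(p : ℝ) / 2) := by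
    intro y
    calc _ ≤ ∫ _z, (2 * π * ξ) ^ (-(p : ℝ) / 2) ∂P :=
          integral_mono (hint y) (integrable_const _)
            fun z => gauss_le_aux hξ _ _ _ (hSpsd z) (hSeig z)
      _ = _ := by simp
  have hpos : ∀ y : Fin p → ℝ, 0 < ∫ z, gaussDensity y (μ z) (S z) ∂P := by
    intro y
    rw [integral_pos_iff_support_of_nonneg
      (fun z => (gauss_pos_aux hξ _ _ _ (hSeig z)).le) (hint y)]
    have : Function.support (fun z => gaussDensity y (μ z) (S z)) = Set.univ := by
      ext z
      simpa using (gauss_pos_aux hξ y (μ z) _ (hSeig z)).ne'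
    rw [this]
    simp
  refine ⟨hle, ?_⟩
  have hb : 0 < 2 * π * ξ := by positivity
  calc _ ≤ ∑ _i : Fin n, (-(p : ℝ) / 2) * Real.log (2 * π * ξ) := by
        refine Finset.sum_le_sum fun i _ => ?_
        rw [← Real.log_rpow hb]
        exact Real.log_le_log (hpos _) (hle _)
    _ = _ := by
        simp
        ring
end

section
/- Let p, d ≥ 1, and let H and Φ be either the Bernoulli family (H = [0,1]^p, Φ(x|η) = ∏_j η_j^{x_j}(1−η_j)^{1−x_j}, data in {0,1}^p) or the ξ-constrained Gaussian family for some ξ > 0 (H the pairs (μ,Σ) with all eigenvalues of Σ at least ξ, Φ(x|(μ,Σ)) = N(x|μ,Σ), data in ℝ^p). Let P be the standard Gaussian measure on ℝ^d and fix data x_1,…,x_n. Then for every finitely supported probability measure G on H with ℓ(G) = Σ_{i=1}^n log ∫_H Φ(x_i|η) dG(η) finite, and every ε > 0, there exists a continuous function f: ℝ^d → H such that Σ_{i=1}^n log ∫_{ℝ^d} Φ(x_i | f(z)) dP(z) ≥ ℓ(G) − ε. -/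
open MeasureTheory Filter Real

/-- The multivariate Bernoulli density `Φ(x|η) = ∏_j η_j^{x_j} (1−η_j)^{1−x_j}`
on `{0,1}^p`, with `{0,1}` encoded as `Bool`. -/
noncomputable def bernDensity {p : ℕ} (x : Fin p → Bool) (η : Fin p → ℝ) : ℝ :=
  ∏ j, if x j then η j else 1 - η j

/-- The standard Gaussian measure on `ℝ^d`. -/
noncomputable def stdGaussian (d : ℕ) : Measure (Fin d → ℝ) :=
  Measure.pi fun _ => ProbabilityTheory.gaussianReal 0 1

lemma aux_cdf_cont : Continuous (ProbabilityTheory.cdf (ProbabilityTheory.gaussianReal 0 1)) := by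
  set γ := ProbabilityTheory.gaussianReal 0 1 with hγ
  have hmono := ProbabilityTheory.monotone_cdf γ
  have : NullSingletonClass γ :=
    ProbabilityTheory.nullSingletonClass_gaussianReal (by norm_num)
  rw [continuous_iff_continuousAt]
  intro x
  rw [hmono.continuousAt_iff_leftLim_eq_rightLim, StieltjesFunction.rightLim_eq]
  have h1 := (ProbabilityTheory.cdf γ).measure_singleton x
  rw [ProbabilityTheory.measure_cdf, measure_singleton] at h1
  have h2 := ENNReal.ofReal_eq_zero.1 h1.symm
  have h3 := hmono.leftLim_le (le_refl x)
  linarith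

instance aux_prob (d : ℕ) : IsProbabilityMeasure (stdGaussian d) := by
  unfold stdGaussian; infer_instance

lemma aux_uniform (d : ℕ) (hd : 1 ≤ d) : ∃ φ : (Fin d → ℝ) → ℝ, Continuous φ ∧
    (∀ z, φ z ∈ Set.Icc (0 : ℝ) 1) ∧
    (∀ u ∈ Set.Icc (0 : ℝ) 1, u ≤ (stdGaussian d).real {z | φ z ≤ u}) ∧
    (∀ u, 0 ≤ u → (stdGaussian d).real {z | φ z < u} ≤ u) := by
  set γ := ProbabilityTheory.gaussianReal 0 1 with hγ
  set F := ProbabilityTheory.cdf γ with hF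
  have hFc : Continuous F := aux_cdf_cont
  let i0 : Fin d := ⟨0, hd⟩
  have hmp : MeasurePreserving (Function.eval i0) (stdGaussian d) γ :=
    measurePreserving_eval (fun _ : Fin d => γ) i0
  have key : ∀ s : Set ℝ, MeasurableSet s →
      (stdGaussian d).real {z | z i0 ∈ s} = γ.real s := by
    intro s hs
    have := hmp.measure_preimage hs.nullMeasurableSet
    rw [measureReal_def, measureReal_def, ← this]
    rfl
  have hIic : ∀ s, γ.real (Set.Iic s) = F s := fun s =>
    (ProbabilityTheory.cdf_eq_real γ s).symm
  have ivt : ∀ u, 0 < u → u < 1 → ∃ s, F s = u := by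
    intro u h0 h1
    obtain ⟨a, ha⟩ := ((ProbabilityTheory.tendsto_cdf_atBot γ).eventually_lt_const h0).exists
    obtain ⟨b, hb⟩ := ((ProbabilityTheory.tendsto_cdf_atTop γ).eventually_const_lt h1).exists
    exact mem_range_of_exists_le_of_exists_ge hFc ⟨a, ha.le⟩ ⟨b, hb.le⟩
  refine ⟨fun z => F (z i0), hFc.comp (continuous_apply i0), fun z =>
    ⟨ProbabilityTheory.cdf_nonneg _ _, ProbabilityTheory.cdf_le_one _ _⟩, ?_, ?_⟩
  · rintro u ⟨h0, h1⟩
    rcases h0.eq_or_lt with h | h0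
    · rw [← h]; exact measureReal_nonneg
    rcases h1.eq_or_lt with h | h1
    · have : {z : Fin d → ℝ | F (z i0) ≤ u} = Set.univ := by
        ext z; simpa [h] using ProbabilityTheory.cdf_le_one γ (z i0)
      rw [this, h]; simp
    obtain ⟨s, hs⟩ := ivt u h0 h1
    have e : (stdGaussian d).real {z | z i0 ∈ Set.Iic s} = u := by
      rw [key _ measurableSet_Iic, hIic, hs]
    refine e.symm.le.trans (measureReal_mono ?_)
    intro z hz
    exact (ProbabilityTheory.monotone_cdf γ hz).trans hs.le
  · intro u h0
    rcases h0.eq_or_lt with h | h0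
    · have : {z : Fin d → ℝ | F (z i0) < u} = ∅ := by
        ext z; simpa [← h] using ProbabilityTheory.cdf_nonneg γ (z i0)
      rw [this]; simp [← h]
    by_cases h1 : u < 1
    · obtain ⟨s, hs⟩ := ivt u h0 h1
      have e : (stdGaussian d).real {z | z i0 ∈ Set.Iic s} = u := by
        rw [key _ measurableSet_Iic, hIic, hs]
      refine le_trans (measureReal_mono ?_) e.le
      intro z hz
      by_contra hc
      have hz' : F (z i0) < u := hz
      have h5 : F s ≤ F (z i0) := ProbabilityTheory.monotone_cdf γ (le_of_not_ge hc)
      linarith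
    · exact le_trans measureReal_le_one (not_lt.1 h1)

lemma aux_weights (d : ℕ) (hd : 1 ≤ d) (K : ℕ) (q : Fin K → ℝ) (hq : ∀ k, 0 ≤ q k)
    (hs : ∑ k, q k = 1) (δ : ℝ) (hδ : 0 < δ) :
    ∃ w : Fin K → (Fin d → ℝ) → ℝ, (∀ k, Continuous (w k)) ∧ (∀ k z, 0 ≤ w k z) ∧
      (∀ z, ∑ k, w k z = 1) ∧ (∀ k, q k - δ ≤ (stdGaussian d).real {z | w k z = 1}) := by
  obtain ⟨φ, hφc, hφ, hlow, hup⟩ := aux_uniform d hd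
  let q' : ℕ → ℝ := fun j => if h : j < K then q ⟨j, h⟩ else 0
  have hq' : ∀ j, 0 ≤ q' j := by
    intro j; simp only [q']; split_ifs
    · exact hq _
    · exact le_rfl
  let c : ℕ → ℝ := fun j => ∑ i ∈ Finset.range j, q' i
  have hcs : ∀ j, c (j + 1) = c j + q' j := fun j => Finset.sum_range_succ _ _
  have hcK : c K = 1 := by
    rw [← hs]
    simp only [c]
    rw [Finset.sum_range]
    exact Finset.sum_congr rfl fun i _ => by simp [q']
  have hcm : Monotone c := monotone_nat_of_le_succ fun j => by linarith [hcs j, hq' j]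
  have hc0 : ∀ j, 0 ≤ c j := fun j => Finset.sum_nonneg fun i _ => hq' i
  have hK : K ≠ 0 := by rintro rfl; simp at hs
  let ramp : ℝ → ℝ := fun t => max 0 (min 1 (t / δ))
  have hramp_mono : Monotone ramp := by
    intro a b hab
    simp only [ramp]
    gcongr
  have hramp1 : ∀ t, ramp t ≤ 1 := fun t => by simp [ramp]
  have hrampc : Continuous ramp := by simp only [ramp]; fun_prop
  have hramp_zero : ∀ t, t ≤ 0 → ramp t = 0 := fun t ht =>
    max_eq_left ((min_le_right _ _).trans (div_nonpos_of_nonpos_of_nonneg ht hδ.le))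
  have hramp_one : ∀ t, δ ≤ t → ramp t = 1 := fun t ht => by
    have : 1 ≤ t / δ := (one_le_div hδ).2 ht
    simp [ramp, min_eq_left this]
  let r : ℕ → (Fin d → ℝ) → ℝ := fun j z => if j = 0 then 1 else ramp (φ z - c j)
  have hrc : ∀ j, Continuous (r j) := by
    intro j; simp only [r]; split_ifs <;> fun_prop
  have hr_anti : ∀ j z, r (j + 1) z ≤ r j z := by
    intro j z
    simp only [r, Nat.succ_ne_zero, if_false]
    split_ifs
    · exact hramp1 _
    · exact hramp_mono (by linarith [hcm (Nat.le_succ j)])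
  refine ⟨fun k z => r k z - r (k + 1) z, fun k => (hrc _).sub (hrc _),
    fun k z => sub_nonneg.2 (hr_anti _ _), ?_, ?_⟩
  · intro z
    rw [← Finset.sum_range (fun j => r j z - r (j + 1) z), Finset.sum_range_sub']
    simp only [r, if_true, hK, if_false, hcK]
    rw [hramp_zero _ (by linarith [(hφ z).2])]; ring
  · intro k
    have hqk : q k = c (k + 1) - c k := by rw [hcs]; simp [q']
    have hck : c (k + 1) ≤ 1 := hcK ▸ hcm k.2
    have h1 := hlow (c (k + 1)) ⟨hc0 _, hck⟩
    have h2 := hup (c k + δ) (by linarith [hc0 k])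
    have hsub : {z | φ z ≤ c (k + 1)} ⊆
        {z | r k z - r (k + 1) z = 1} ∪ {z | φ z < c k + δ} := by
      intro z hz
      by_cases hlt : φ z < c k + δ
      · exact Or.inr hlt
      · left
        have hz' : φ z ≤ c (k + 1) := hz
        have e1 : r (k + 1) z = 0 := by
          simp only [r, Nat.succ_ne_zero, if_false]
          exact hramp_zero _ (by linarith)
        have e2 : r k z = 1 := by
          simp only [r]
          split_ifs
          · rfl
          · exact hramp_one _ (by linarith)
        show r k z - r (k + 1) z = 1
        rw [e1, e2]; ring
    have h3 := (measureReal_mono (μ := stdGaussian d) hsub).trans (measureReal_union_le _ _)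
    linarith

lemma aux_main {V : Type*} [AddCommGroup V] [Module ℝ V] [TopologicalSpace V]
    [IsTopologicalAddGroup V] [ContinuousSMul ℝ V] (C : Set V) (hC : Convex ℝ C)
    (d : ℕ) (hd : 1 ≤ d) (n : ℕ) (Φ : Fin n → V → ℝ) (hΦ : ∀ i, ContinuousOn (Φ i) C)
    (hΦ0 : ∀ i, ∀ v ∈ C, 0 ≤ Φ i v) (K : ℕ) (q : Fin K → ℝ) (η : Fin K → V)
    (hq : ∀ k, 0 ≤ q k) (hs : ∑ k, q k = 1) (hη : ∀ k, η k ∈ C)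
    (hpos : ∀ i, 0 < ∑ k, q k * Φ i (η k)) (ε : ℝ) (hε : 0 < ε) :
    ∃ f : (Fin d → ℝ) → V, Continuous f ∧ (∀ z, f z ∈ C) ∧
      (∑ i, Real.log (∑ k, q k * Φ i (η k))) - ε ≤
        ∑ i, Real.log (∫ z, Φ i (f z) ∂(stdGaussian d)) := by
  let L : Fin n → ℝ → ℝ := fun i δ => ∑ k, (q k - δ) * Φ i (η k)
  have hLc : ∀ i, Continuous (L i) := by intro i; simp only [L]; fun_prop
  have hL0 : ∀ i, L i 0 = ∑ k, q k * Φ i (η k) := by intro i; simp [L]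
  have hLp : ∀ᶠ δ in nhds (0 : ℝ), ∀ i, 0 < L i δ := by
    rw [eventually_all]
    intro i
    exact (hLc i).continuousAt.eventually_const_lt (by rw [hL0]; exact hpos i)
  have hlog : ContinuousAt (fun δ => ∑ i, Real.log (L i δ)) 0 := by
    apply tendsto_finsetSum
    intro i _
    exact ((hLc i).continuousAt).log (by rw [hL0]; exact (hpos i).ne')
  have hlog' : ∀ᶠ δ in nhds (0 : ℝ),
      (∑ i, Real.log (∑ k, q k * Φ i (η k))) - ε < ∑ i, Real.log (L i δ) := by
    apply hlog.eventually_const_lt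
    simp only [hL0]; linarith
  obtain ⟨δ, ⟨hδp, hδl⟩, hδ⟩ :=
    (((hLp.and hlog').filter_mono nhdsWithin_le_nhds).and
      (self_mem_nhdsWithin (a := (0 : ℝ)) (s := Set.Ioi 0))).exists
  have hδ : 0 < δ := hδ
  obtain ⟨w, hwc, hw0, hws, hwm⟩ := aux_weights d hd K q hq hs δ hδ
  let f : (Fin d → ℝ) → V := fun z => ∑ k, w k z • η k
  have hfc : Continuous f := by
    simp only [f]
    exact continuous_finsetSum _ fun k _ => (hwc k).smul continuous_const
  have hfH : ∀ z, f z ∈ convexHull ℝ (Set.range η) := fun z =>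
    (convex_convexHull ℝ _).sum_mem (fun k _ => hw0 k z) (hws z)
      (fun k _ => subset_convexHull ℝ _ ⟨k, rfl⟩)
  have hHC : convexHull ℝ (Set.range η) ⊆ C := convexHull_min (by rintro _ ⟨k, rfl⟩; exact hη k) hC
  have hfC : ∀ z, f z ∈ C := fun z => hHC (hfH z)
  have hcomp : IsCompact (convexHull ℝ (Set.range η)) :=
    (Set.finite_range η).isCompact_convexHull ℝ
  have hint : ∀ i, Integrable (fun z => Φ i (f z)) (stdGaussian d) := by
    intro i
    obtain ⟨M, hM⟩ := hcomp.exists_bound_of_continuousOn ((hΦ i).mono hHC)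
    have hc : Continuous (fun z => Φ i (f z)) := (hΦ i).comp_continuous hfc hfC
    exact Integrable.of_bound hc.aestronglyMeasurable M (ae_of_all _ fun z => hM _ (hfH z))
  refine ⟨f, hfc, hfC, hδl.le.trans (Finset.sum_le_sum fun i _ => Real.log_le_log (hδp i) ?_)⟩
  have hms : ∀ k, MeasurableSet {z | w k z = 1} := fun k =>
    (isClosed_eq (hwc k) continuous_const).measurableSet
  have hI : ∀ k, Integrable ({z | w k z = 1}.indicator fun _ => Φ i (η k)) (stdGaussian d) :=
    fun k => (integrable_const _).indicator (hms k)
  calc L i δ ≤ ∑ k, (stdGaussian d).real {z | w k z = 1} * Φ i (η k) :=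
        Finset.sum_le_sum fun k _ => mul_le_mul_of_nonneg_right (hwm k) (hΦ0 i _ (hη k))
    _ = ∫ z, ∑ k, {z | w k z = 1}.indicator (fun _ => Φ i (η k)) z ∂(stdGaussian d) := by
        rw [integral_finsetSum _ fun k _ => hI k]
        refine Finset.sum_congr rfl fun k _ => ?_
        rw [integral_indicator_const _ (hms k), smul_eq_mul]
    _ ≤ ∫ z, Φ i (f z) ∂(stdGaussian d) := by
        refine integral_mono (integrable_finsetSum _ fun k _ => hI k) (hint i) fun z => ?_
        by_cases h : ∃ k, w k z = 1
        · obtain ⟨k, hk⟩ := h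
          have hz : ∀ j, j ≠ k → w j z = 0 := by
            intro j hj
            have h1 := Finset.add_sum_erase Finset.univ (fun j => w j z) (Finset.mem_univ k)
            have h2 := Finset.single_le_sum (f := fun j => w j z) (fun j _ => hw0 j z)
              (Finset.mem_erase.2 ⟨hj, Finset.mem_univ j⟩)
            have h3 := hws z
            have h4 := hw0 j z
            linarith
          have hf : f z = η k := by
            simp only [f]
            rw [Finset.sum_eq_single k (fun j _ hj => by rw [hz j hj, zero_smul]) (by simp),
              hk, one_smul]
          have : ∑ j, {z | w j z = 1}.indicator (fun _ => Φ i (η j)) z = Φ i (η k) := by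
            rw [Finset.sum_eq_single k (fun j _ hj => by simp [hz j hj]) (by simp)]
            simp [hk]
          simp only [this, hf, le_refl]
        · push Not at h
          have : ∑ j, {z | w j z = 1}.indicator (fun _ => Φ i (η j)) z = 0 :=
            Finset.sum_eq_zero fun j _ => by simp [h j]
          simp only [this]
          exact hΦ0 i _ (hfC z)

lemma aux_posDef {p : ℕ} {ξ : ℝ} (hξ : 0 < ξ) {S : Matrix (Fin p) (Fin p) ℝ}
    (h : (S - ξ • (1 : Matrix (Fin p) (Fin p) ℝ)).PosSemidef) : S.PosDef := by
  have h1 : (ξ • (1 : Matrix (Fin p) (Fin p) ℝ)).PosDef := Matrix.PosDef.one.smul hξ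
  have := h1.add_posSemidef h
  simpa using this

lemma aux_posSemidef_comb {p : ℕ} {A B : Matrix (Fin p) (Fin p) ℝ} (hA : A.PosSemidef)
    (hB : B.PosSemidef) {a b : ℝ} (ha : 0 ≤ a) (hb : 0 ≤ b) : (a • A + b • B).PosSemidef :=
  (hA.smul ha).add (hB.smul hb)

/-- The core approximation step in the proof of Theorem 3 of the paper, in both the
Bernoulli-output and the `ξ`-constrained Gaussian-output cases: any finite mixture
`G = Σ_k π_k δ_{η_k}` over the output family, with finite log-likelihood
`ℓ(G) = Σ_i log Σ_k π_k Φ(x_i|η_k)`, can be realised up to `ε` in log-likelihood by a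
continuous decoder `f` with values in the parameter space, pushed forward through the
standard Gaussian prior on `ℝ^d`. -/
theorem statement7 (p d : ℕ) (hp : 1 ≤ p) (hd : 1 ≤ d) :
    -- Bernoulli-output case
    (∀ (n : ℕ) (xs : Fin n → (Fin p → Bool)) (K : ℕ)
      (π' : Fin K → ℝ) (η : Fin K → (Fin p → ℝ)),
      (∀ k, 0 ≤ π' k) → (∑ k, π' k) = 1 →
      (∀ k j, η k j ∈ Set.Icc (0 : ℝ) 1) →
      (∀ i, 0 < ∑ k, π' k * bernDensity (xs i) (η k)) →
      ∀ ε > (0 : ℝ), ∃ f : (Fin d → ℝ) → (Fin p → ℝ), Continuous f ∧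
        (∀ z j, f z j ∈ Set.Icc (0 : ℝ) 1) ∧
        (∑ i, Real.log (∑ k, π' k * bernDensity (xs i) (η k))) - ε ≤
          ∑ i, Real.log (∫ z, bernDensity (xs i) (f z) ∂(stdGaussian d)))
    ∧
    -- constrained Gaussian-output case
    (∀ ξ : ℝ, 0 < ξ →
      ∀ (n : ℕ) (xs : Fin n → (Fin p → ℝ)) (K : ℕ)
        (π' : Fin K → ℝ) (η : Fin K → (Fin p → ℝ) × Matrix (Fin p) (Fin p) ℝ),
        (∀ k, 0 ≤ π' k) → (∑ k, π' k) = 1 →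
        (∀ k, ((η k).2).PosSemidef ∧
          ((η k).2 - ξ • (1 : Matrix (Fin p) (Fin p) ℝ)).PosSemidef) →
        (∀ i, 0 < ∑ k, π' k * gaussDensity (xs i) (η k).1 (η k).2) →
        ∀ ε > (0 : ℝ),
          ∃ f : (Fin d → ℝ) → (Fin p → ℝ) × Matrix (Fin p) (Fin p) ℝ, Continuous f ∧
            (∀ z, ((f z).2).PosSemidef ∧
              ((f z).2 - ξ • (1 : Matrix (Fin p) (Fin p) ℝ)).PosSemidef) ∧
            (∑ i, Real.log (∑ k, π' k * gaussDensity (xs i) (η k).1 (η k).2)) - ε ≤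
              ∑ i, Real.log (∫ z, gaussDensity (xs i) (f z).1 (f z).2 ∂(stdGaussian d))) := by
  refine ⟨?_, ?_⟩
  · intro n xs K π' η h0 h1 hη hpos ε hε
    obtain ⟨f, hf, hfC, hfl⟩ := aux_main {v : Fin p → ℝ | ∀ j, v j ∈ Set.Icc (0 : ℝ) 1}
      (by
        intro x hx y hy a b ha hb hab j
        exact convex_Icc (0 : ℝ) 1 (hx j) (hy j) ha hb hab)
      d hd n (fun i => bernDensity (xs i))
      (by
        intro i
        apply Continuous.continuousOn
        unfold bernDensity
        refine continuous_finsetProd _ fun j _ => ?_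
        split_ifs <;> fun_prop)
      (by
        intro i v hv
        unfold bernDensity
        refine Finset.prod_nonneg fun j _ => ?_
        have := hv j
        split_ifs
        · exact this.1
        · linarith [this.2])
      K π' η h0 h1 hη hpos ε hε
    exact ⟨f, hf, hfC, hfl⟩
  · intro ξ hξ n xs K π' η h0 h1 hη hpos ε hε
    obtain ⟨f, hf, hfC, hfl⟩ := aux_main
      {v : (Fin p → ℝ) × Matrix (Fin p) (Fin p) ℝ | v.2.PosSemidef ∧
          (v.2 - ξ • (1 : Matrix (Fin p) (Fin p) ℝ)).PosSemidef}
      (by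
        intro x hx y hy a b ha hb hab
        refine ⟨aux_posSemidef_comb hx.1 hy.1 ha hb, ?_⟩
        have := aux_posSemidef_comb hx.2 hy.2 ha hb
        have e : (a • x + b • y).2 - ξ • (1 : Matrix (Fin p) (Fin p) ℝ) =
            a • (x.2 - ξ • (1 : Matrix (Fin p) (Fin p) ℝ)) +
            b • (y.2 - ξ • (1 : Matrix (Fin p) (Fin p) ℝ)) := by
          have hb' : b = 1 - a := by linarith
          subst hb'
          simp only [Prod.snd_add, Prod.smul_snd]
          module
        rw [e]; exact this)
      d hd n (fun i v => gaussDensity (xs i) v.1 v.2)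
      (by
        intro i v hv
        apply ContinuousAt.continuousWithinAt
        have hdet : 0 < v.2.det := (aux_posDef hξ hv.2).det_pos
        have hdc : ContinuousAt
            (fun v : (Fin p → ℝ) × Matrix (Fin p) (Fin p) ℝ => v.2.det) v :=
          (continuous_snd.matrix_det).continuousAt
        have hinv : ContinuousAt
            (fun v : (Fin p → ℝ) × Matrix (Fin p) (Fin p) ℝ => (v.2)⁻¹) v := by
          have h2 : ContinuousAt (Inv.inv : Matrix (Fin p) (Fin p) ℝ → _) v.2 := by
            apply continuousAt_matrix_inv
            rw [Ring.inverse_eq_inv']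
            exact continuousAt_inv₀ hdet.ne'
          exact ContinuousAt.comp h2 continuousAt_snd
        have hsub : ContinuousAt
            (fun v : (Fin p → ℝ) × Matrix (Fin p) (Fin p) ℝ => xs i - v.1) v :=
          continuousAt_const.sub continuousAt_fst
        have hquad : ContinuousAt (fun v : (Fin p → ℝ) × Matrix (Fin p) (Fin p) ℝ =>
            dotProduct (xs i - v.1) (((v.2)⁻¹).mulVec (xs i - v.1))) v := by
          have hc : Continuous (fun t : (Fin p → ℝ) × Matrix (Fin p) (Fin p) ℝ =>
              dotProduct t.1 (t.2.mulVec t.1)) :=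
            continuous_fst.dotProduct (continuous_snd.matrix_mulVec continuous_fst)
          exact hc.continuousAt.comp (hsub.prodMk hinv)
        unfold gaussDensity
        exact (continuousAt_const.mul (hdc.rpow_const (Or.inl hdet.ne'))).mul
          ((hquad.neg.div_const 2).rexp))
      (by
        intro i v hv
        have hdet : 0 < v.2.det := (aux_posDef hξ hv.2).det_pos
        unfold gaussDensity
        positivity)
      K π' η h0 h1 hη hpos ε hε
    exact ⟨f, hf, hfC, hfl⟩
end

section
/- Let p, d ≥ 1, let P be a probability measure on ℝ^d, let w ∈ ℝ^d with P({z : wᵀz ≤ 0}) > 0, and let (α_k)_{k≥1} be nonnegative reals with α_k → +∞. Define σ_k²(z) = exp(α_k·tanh(α_k·(wᵀz)) − α_k). Then ∫_{ℝ^d} (2π·σ_k²(z))^{-p/2} dP(z) → +∞ as k → +∞. -/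
open MeasureTheory Filter Real

/-- The divergence claim for the `i`-th likelihood contribution in the proof of Theorem 1
of the paper: with `σ_k²(z) = exp(α_k tanh(α_k wᵀz) − α_k)` and `P({wᵀz ≤ 0}) > 0`,
`∫ (2π σ_k²(z))^{-p/2} dP(z) → +∞` as `k → ∞`. -/
theorem statement11 (p d : ℕ) (hp : 1 ≤ p) (hd : 1 ≤ d)
    (P : Measure (Fin d → ℝ)) [IsProbabilityMeasure P]
    (w : Fin d → ℝ) (hw : 0 < P {z | dotProduct w z ≤ 0})
    (α : ℕ → ℝ) (hα0 : ∀ k, 0 ≤ α k) (hα : Tendsto α atTop atTop) :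
    Tendsto (fun k : ℕ => ∫⁻ z, ENNReal.ofReal
        ((2 * π * Real.exp (α k * Real.tanh (α k * dotProduct w z) - α k))
          ^ (-(p : ℝ) / 2)) ∂P)
      atTop (nhds ⊤) := by
  have hp' : (0 : ℝ) < (p : ℝ) / 2 := by
    have : (1 : ℝ) ≤ p := by exact_mod_cast hp
    linarith
  have hS : MeasurableSet {z : Fin d → ℝ | dotProduct w z ≤ 0} := by
    apply measurableSet_le _ measurable_const
    unfold dotProduct
    fun_prop
  have hc : Tendsto (fun k => (2 * π * Real.exp (-α k)) ^ (-(p : ℝ) / 2)) atTop atTop := by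
    have h1 : ∀ k, (2 * π * Real.exp (-α k)) ^ (-(p : ℝ) / 2)
        = (2 * π) ^ (-(p : ℝ) / 2) * Real.exp (α k * ((p : ℝ) / 2)) := by
      intro k
      rw [Real.mul_rpow (by positivity) (by positivity), ← Real.exp_mul]
      congr 2
      ring
    simp_rw [h1]
    exact (Real.tendsto_exp_atTop.comp (hα.atTop_mul_const hp')).const_mul_atTop (by positivity)
  have hlim : Tendsto (fun k => ENNReal.ofReal ((2 * π * Real.exp (-α k)) ^ (-(p : ℝ) / 2))
      * P {z | dotProduct w z ≤ 0}) atTop (nhds ⊤) := by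
    have h := ENNReal.Tendsto.mul_const (b := P {z | dotProduct w z ≤ 0})
      (ENNReal.tendsto_ofReal_atTop.comp hc) (Or.inl ENNReal.top_ne_zero)
    rwa [ENNReal.top_mul hw.ne'] at h
  refine tendsto_of_tendsto_of_tendsto_of_le_of_le hlim tendsto_const_nhds ?_ (fun _ => le_top)
  intro k
  beta_reduce
  rw [← setLIntegral_const]
  refine le_trans (setLIntegral_mono' hS ?_) (setLIntegral_le_lintegral _ _)
  intro z hz
  apply ENNReal.ofReal_le_ofReal
  apply Real.rpow_le_rpow_of_nonpos (by positivity) _ (by linarith)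
  have ht : Real.tanh (α k * dotProduct w z) ≤ 0 := by
    rw [Real.tanh_eq_sinh_div_cosh]
    exact div_nonpos_of_nonpos_of_nonneg
      (Real.sinh_nonpos_iff.2 (mul_nonpos_of_nonneg_of_nonpos (hα0 k) hz)) (Real.cosh_pos _).le
  have h2 : α k * Real.tanh (α k * dotProduct w z) ≤ 0 :=
    mul_nonpos_of_nonneg_of_nonpos (hα0 k) ht
  gcongr
  linarith
end

section
/- Fix p ≥ 1, x ∈ ℝ^p, and ξ > 0. Let H ⊂ ℝ^p × (p×p symmetric real matrices) be the set of pairs (μ,Σ) with Σ positive semidefinite and all eigenvalues of Σ at least ξ. Then the function (μ,Σ) ↦ N(x|μ,Σ) on H vanishes at infinity: for every ε > 0 there exists R > 0 such that every (μ,Σ) ∈ H with ‖μ‖ + ‖Σ‖ ≥ R satisfies N(x|μ,Σ) ≤ ε. -/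
open MeasureTheory Filter Real

/-- The Frobenius norm on `p × p` real matrices (a fixed norm on matrices). -/
noncomputable def matNorm {p : ℕ} (S : Matrix (Fin p) (Fin p) ℝ) : ℝ :=
  Real.sqrt (∑ a, ∑ b, S a b ^ 2)

theorem aux_eig {p : ℕ} {S : Matrix (Fin p) (Fin p) ℝ} (hS : S.IsHermitian) {ξ : ℝ}
    (h : (S - ξ • (1 : Matrix (Fin p) (Fin p) ℝ)).PosSemidef) (i : Fin p) :
    ξ ≤ hS.eigenvalues i := by
  have h1 := h.dotProduct_mulVec_nonneg (hS.eigenvectorBasis i).ofLp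
  have h2 : dotProduct (hS.eigenvectorBasis i).ofLp (hS.eigenvectorBasis i).ofLp = (1 : ℝ) := by
    have h3 := hS.eigenvectorBasis.orthonormal.1 i
    have h4 := EuclideanSpace.real_norm_sq_eq (hS.eigenvectorBasis i)
    rw [h3] at h4
    simp only [dotProduct]
    rw [← one_pow 2, h4]
    exact Finset.sum_congr rfl fun j _ => by ring
  rw [Matrix.sub_mulVec, Matrix.smul_mulVec, Matrix.one_mulVec, hS.mulVec_eigenvectorBasis] at h1
  simp only [star_trivial, dotProduct_sub, dotProduct_smul, h2, smul_eq_mul, mul_one] at h1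
  linarith

theorem aux_det {p : ℕ} {S : Matrix (Fin p) (Fin p) ℝ} (hS : S.PosSemidef) {ξ : ℝ} (hξ : 0 < ξ)
    (h : (S - ξ • (1 : Matrix (Fin p) (Fin p) ℝ)).PosSemidef) :
    ξ ^ p ≤ S.det ∧ ξ ^ (p - 1) * S.trace ≤ p * S.det := by
  have hd := hS.1.det_eq_prod_eigenvalues
  have ht := hS.1.trace_eq_sum_eigenvalues
  have he := aux_eig hS.1 h
  simp only [RCLike.ofReal_real_eq_id, id_eq] at hd ht
  constructor
  · rw [hd]
    calc ξ ^ p = ∏ i : Fin p, ξ := by simp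
      _ ≤ _ := Finset.prod_le_prod (fun _ _ => hξ.le) fun i _ => he i
  · rw [ht, Finset.mul_sum]
    calc _ ≤ ∑ i : Fin p, S.det := by
          refine Finset.sum_le_sum fun i _ => ?_
          rw [hd, ← Finset.prod_erase_mul _ _ (Finset.mem_univ i)]
          refine mul_le_mul_of_nonneg_right ?_ (hξ.le.trans (he i))
          calc ξ ^ (p - 1) = ∏ j ∈ Finset.univ.erase i, ξ := by simp
            _ ≤ _ := Finset.prod_le_prod (fun _ _ => hξ.le) fun i _ => he i
      _ = _ := by simp

theorem aux_fact {p : ℕ} {S : Matrix (Fin p) (Fin p) ℝ} (hS : S.PosSemidef) :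
    ∃ B : Matrix (Fin p) (Fin p) ℝ, S = B.transpose * B := by
  open scoped MatrixOrder in
  obtain ⟨B, hB⟩ := CStarAlgebra.nonneg_iff_eq_star_mul_self.mp hS.nonneg
  exact ⟨B, by simpa [Matrix.star_eq_conjTranspose] using hB⟩

theorem aux_norm {p : ℕ} {S : Matrix (Fin p) (Fin p) ℝ} (hS : S.PosSemidef) :
    matNorm S ≤ S.trace := by
  have h0 : 0 ≤ S.trace := hS.trace_nonneg
  obtain ⟨B, hB⟩ := aux_fact hS
  refine Real.sqrt_le_iff.mpr ⟨h0, ?_⟩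
  rw [sq, Matrix.trace, Finset.sum_mul_sum]
  refine Finset.sum_le_sum fun a _ => Finset.sum_le_sum fun b _ => ?_
  simp only [hB, Matrix.diag_apply, Matrix.mul_apply, Matrix.transpose_apply]
  have := Finset.sum_mul_sq_le_sq_mul_sq Finset.univ (fun j => B j a) (fun j => B j b)
  simpa [sq] using this

theorem aux_quad {p : ℕ} {S : Matrix (Fin p) (Fin p) ℝ} (hS : S.PosSemidef) (hd : 0 < S.det)
    (v : Fin p → ℝ) : ∑ i, v i ^ 2 ≤ S.trace * dotProduct v (S⁻¹.mulVec v) := by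
  obtain ⟨B, hB⟩ := aux_fact hS
  set w := S⁻¹.mulVec v with hw
  have hv : v = S.mulVec w := by
    rw [hw, Matrix.mulVec_mulVec, Matrix.mul_nonsing_inv _ (isUnit_iff_ne_zero.mpr hd.ne'),
      Matrix.one_mulVec]
  set u := B.mulVec w with hu
  have hv2 : v = B.transpose.mulVec u := by
    refine hv.trans ?_
    rw [hu, Matrix.mulVec_mulVec w B.transpose B, ← hB]
  have hq : dotProduct v w = ∑ j, u j ^ 2 := by
    rw [hv2, Matrix.mulVec_transpose, ← Matrix.dotProduct_mulVec, ← hu]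
    simp [dotProduct, sq]
  rw [hq, Matrix.trace, Finset.sum_mul]
  refine Finset.sum_le_sum fun i _ => ?_
  have := Finset.sum_mul_sq_le_sq_mul_sq Finset.univ (fun j => B j i) u
  rw [hv2, hB]
  simpa [Matrix.mul_apply, Matrix.mulVec, dotProduct, sq] using this

/-- Key claim in the compactification argument in the proof of Theorem 2 of the paper
(Gaussian case): on the constrained parameter space `H` of pairs `(μ,Σ)` with `Σ` positive
semidefinite and all eigenvalues at least `ξ`, the function `(μ,Σ) ↦ N(x|μ,Σ)` vanishes at
infinity. -/
theorem statement14 (p : ℕ) (hp : 1 ≤ p) (x : EuclideanSpace ℝ (Fin p))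
    (ξ : ℝ) (hξ : 0 < ξ) :
    ∀ ε > (0 : ℝ), ∃ R > (0 : ℝ),
      ∀ (μ : EuclideanSpace ℝ (Fin p)) (S : Matrix (Fin p) (Fin p) ℝ),
        S.PosSemidef → (S - ξ • (1 : Matrix (Fin p) (Fin p) ℝ)).PosSemidef →
        R ≤ ‖μ‖ + matNorm S → gaussDensity x μ S ≤ ε := by
  intro ε hε
  set C : ℝ := (2 * π) ^ (-(p : ℝ) / 2) with hC
  have hC0 : 0 < C := by positivity
  have hp0 : (0 : ℝ) < p := by exact_mod_cast hp
  obtain ⟨D, hD0, hD⟩ : ∃ D > (0 : ℝ), ∀ s ≥ D, C * s ^ (-(1 : ℝ) / 2) ≤ ε := by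
    have h1 : Tendsto (fun s : ℝ => C * s ^ (-(1 : ℝ) / 2)) atTop (nhds (C * 0)) := by
      have := (tendsto_rpow_neg_atTop (y := 1 / 2) (by norm_num)).const_mul C
      simpa [neg_div] using this
    rw [mul_zero] at h1
    obtain ⟨D, hD⟩ := eventually_atTop.mp (h1.eventually_le_const hε)
    exact ⟨max D 1, by positivity, fun s hs => hD s ((le_max_left _ _).trans hs)⟩
  set T : ℝ := p * D / ξ ^ (p - 1) with hT
  have hT0 : 0 < T := by positivity
  set K : ℝ := C * (ξ ^ p) ^ (-(1 : ℝ) / 2) with hK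
  have hK0 : 0 < K := by positivity
  obtain ⟨Y, hY0, hY⟩ : ∃ Y > (0 : ℝ), ∀ y ≥ Y, K * Real.exp (-(y ^ 2 / T) / 2) ≤ ε := by
    have h2 : Tendsto (fun y : ℝ => y ^ 2 / T / 2) atTop atTop :=
      ((tendsto_pow_atTop two_ne_zero).atTop_div_const hT0).atTop_div_const two_pos
    have h1 : Tendsto (fun y : ℝ => K * Real.exp (-(y ^ 2 / T / 2))) atTop (nhds (K * 0)) :=
      (Real.tendsto_exp_neg_atTop_nhds_zero.comp h2).const_mul K
    rw [mul_zero] at h1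
    obtain ⟨D, hD⟩ := eventually_atTop.mp (h1.eventually_le_const hε)
    exact ⟨max D 1, by positivity, fun s hs => by
      rw [neg_div]; exact hD s ((le_max_left _ _).trans hs)⟩
  refine ⟨T + Y + ‖x‖, by positivity, fun μ S hS hSξ hR => ?_⟩
  obtain ⟨hd1, hd2⟩ := aux_det hS hξ hSξ
  have hd0 : 0 < S.det := lt_of_lt_of_le (by positivity) hd1
  have hn := aux_norm hS
  have ht0 : 0 ≤ S.trace := hS.trace_nonneg
  have hq := aux_quad hS hd0 (x.ofLp - μ.ofLp)
  have hnorm : ∑ i, (x.ofLp - μ.ofLp) i ^ 2 = ‖x - μ‖ ^ 2 := by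
    rw [EuclideanSpace.real_norm_sq_eq]; rfl
  rw [hnorm] at hq
  unfold gaussDensity
  rw [← hC]
  set q := dotProduct (x.ofLp - μ.ofLp) (S⁻¹.mulVec (x.ofLp - μ.ofLp)) with hqdef
  have hq0 : 0 ≤ q := by
    have := hS.inv.dotProduct_mulVec_nonneg (x.ofLp - μ.ofLp)
    rwa [star_trivial] at this
  rcases le_or_gt T S.trace with hc | hc
  · have hDd : D ≤ S.det := by
      have h3 : ξ ^ (p - 1) * T = p * D := by rw [hT]; field_simp
      have h4 : ξ ^ (p - 1) * T ≤ ξ ^ (p - 1) * S.trace :=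
        mul_le_mul_of_nonneg_left hc (by positivity)
      exact le_of_mul_le_mul_left (by linarith) hp0
    refine le_trans ?_ (hD _ hDd)
    refine mul_le_of_le_one_right (by positivity) ?_
    exact Real.exp_le_one_iff.mpr (by linarith)
  · have hy : Y ≤ ‖x - μ‖ := by
      have := norm_sub_norm_le μ x
      rw [norm_sub_rev] at this
      linarith
    refine le_trans ?_ (hY _ hy)
    have hqT : ‖x - μ‖ ^ 2 / T ≤ q := by
      rw [div_le_iff₀ hT0]
      nlinarith
    have hr : S.det ^ (-(1 : ℝ) / 2) ≤ (ξ ^ p) ^ (-(1 : ℝ) / 2) :=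
      Real.rpow_le_rpow_of_nonpos (by positivity) hd1 (by norm_num)
    rw [hK]
    gcongr
end
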